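/- Majority dynamics does not enable positive MajUD-consensus existence control: there exists a profile P (over at least 3 alternatives) that has a MajUD-consensus alternative such that for every update order σ, MD_σ(P) has no MajUD-consensus alternative. -/

import Mathlib

attribute [local instance] Classical.propDecidable

noncomputable section

/-- A preference over the set of alternatives `A`: a binary relation. -/
abbrev Pref (A : Type) := A → A → Prop

/-- A preference is a strict partial order: irreflexive and transitive. -/
def IsPref {A : Type} (pref : Pref A) : Prop :=
  Irreflexive pref ∧ Transitive pref

variable {A : Type} [Fintype A] [DecidableEq A]

/-- The support `n_P(ab)`: the number of agents preferring `a` to `b` in profile `P`. -/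
def support {n : ℕ} (P : Fin n → Pref A) (a b : A) : ℕ :=
  (Finset.univ.filter fun i => P i a b).card

/-- An update order: a list of ordered pairs of distinct alternatives containing,
for each unordered pair `{a, b}` of distinct alternatives, exactly one of `ab` or `ba`,
each exactly once. -/
def IsUpdateOrder (σ : List (A × A)) : Prop :=
  (∀ p ∈ σ, p.1 ≠ p.2) ∧
  (∀ a b : A, a ≠ b → σ.count (a, b) + σ.count (b, a) = 1)

/-- One step of majority dynamics, discussing the pair `p`: agents already ranking
`p.1` versus `p.2` keep their preference; every other agent adds `p.1 ≻ p.2` if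
`n_P(p.1 p.2) ≥ n_P(p.2 p.1)` (ties broken in favour of the first alternative of the
pair), and otherwise adds `p.2 ≻ p.1`, then takes the transitive closure. -/
def mdStep {n : ℕ} (P : Fin n → Pref A) (p : A × A) : Fin n → Pref A :=
  fun i =>
    if P i p.1 p.2 ∨ P i p.2 p.1 then P i
    else if support P p.2 p.1 ≤ support P p.1 p.2 then
      Relation.TransGen (fun x y => P i x y ∨ (x = p.1 ∧ y = p.2))
    else
      Relation.TransGen (fun x y => P i x y ∨ (x = p.2 ∧ y = p.1))

/-- Majority dynamics `MD_σ(P)`: process the pairs of the update order `σ` in order. -/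
def MD {n : ℕ} (σ : List (A × A)) (P : Fin n → Pref A) : Fin n → Pref A :=
  σ.foldl mdStep P

/-- `a` is a Condorcet winner in `P`. -/
def CondorcetWinner {n : ℕ} (P : Fin n → Pref A) (a : A) : Prop :=
  ∀ b, b ≠ a → support P b a < support P a b

/-- `a` is a Condorcet loser in `P`. -/
def CondorcetLoser {n : ℕ} (P : Fin n → Pref A) (a : A) : Prop :=
  ∀ b, b ≠ a → support P a b < support P b a

/-- `a` is undominated in a preference. -/
def Undominated {A : Type} (pref : Pref A) (a : A) : Prop := ∀ b, ¬ pref b a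

/-- `a` is dominant in a preference. -/
def Dominant {A : Type} (pref : Pref A) (a : A) : Prop := ∀ b, b ≠ a → pref a b

/-- `a` is dominated (by every other alternative) in a preference. -/
def DominatedIn {A : Type} (pref : Pref A) (a : A) : Prop := ∀ b, b ≠ a → pref b a

/-- Number of preferences of `P` in which `a` is undominated. -/
def udCount {n : ℕ} (P : Fin n → Pref A) (a : A) : ℕ :=
  (Finset.univ.filter fun i => Undominated (P i) a).card

/-- Number of preferences of `P` in which `a` is dominant. -/
def domCount {n : ℕ} (P : Fin n → Pref A) (a : A) : ℕ :=
  (Finset.univ.filter fun i => Dominant (P i) a).card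

/-- Number of preferences of `P` in which `a` is dominated. -/
def domdCount {n : ℕ} (P : Fin n → Pref A) (a : A) : ℕ :=
  (Finset.univ.filter fun i => DominatedIn (P i) a).card

/-- `a` is undominated in at least one preference and no alternative is undominated
in strictly more preferences than `a`. -/
def PlurUDTop {n : ℕ} (P : Fin n → Pref A) (a : A) : Prop :=
  0 < udCount P a ∧ ∀ b, udCount P b ≤ udCount P a

/-- `a` is the PlurUD-consensus alternative of `P`. -/
def PlurUDConsensus {n : ℕ} (P : Fin n → Pref A) (a : A) : Prop :=
  PlurUDTop P a ∧ ∀ b, PlurUDTop P b → b = a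

/-- `a` is dominant in at least one preference and no alternative is dominant
in strictly more preferences than `a`. -/
def PlurDomTop {n : ℕ} (P : Fin n → Pref A) (a : A) : Prop :=
  0 < domCount P a ∧ ∀ b, domCount P b ≤ domCount P a

/-- `a` is the PlurDom-consensus alternative of `P`. -/
def PlurDomConsensus {n : ℕ} (P : Fin n → Pref A) (a : A) : Prop :=
  PlurDomTop P a ∧ ∀ b, PlurDomTop P b → b = a

/-- `a` is dominated in at least one preference and no alternative is dominated
in strictly more preferences than `a`. -/
def PlurDomdTop {n : ℕ} (P : Fin n → Pref A) (a : A) : Prop :=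
  0 < domdCount P a ∧ ∀ b, domdCount P b ≤ domdCount P a

/-- `a` is the (unique) plurality dominated alternative of `P`. -/
def PlurDomdConsensus {n : ℕ} (P : Fin n → Pref A) (a : A) : Prop :=
  PlurDomdTop P a ∧ ∀ b, PlurDomdTop P b → b = a

/-- `a` is the MajUD-consensus alternative of `P`: undominated in strictly more than
`n / 2` of the preferences, and the unique alternative with this property. -/
def MajUDConsensus {n : ℕ} (P : Fin n → Pref A) (a : A) : Prop :=
  (n < 2 * udCount P a) ∧ ∀ b, n < 2 * udCount P b → b = a

/-- `a` is the MajDom-consensus alternative of `P`: dominant in strictly more than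
`n / 2` of the preferences (such an alternative is automatically unique). -/
def MajDomConsensus {n : ℕ} (P : Fin n → Pref A) (a : A) : Prop :=
  n < 2 * domCount P a

/-- `a` is the UnanUD-consensus alternative of `P`: undominated in every preference,
and the unique alternative with this property. -/
def UnanUDConsensus {n : ℕ} (P : Fin n → Pref A) (a : A) : Prop :=
  (∀ i, Undominated (P i) a) ∧ ∀ b, (∀ i, Undominated (P i) b) → b = a

/-- `a` is the UnanDom-consensus alternative of `P`: dominant in every preference. -/
def UnanDomConsensus {n : ℕ} (P : Fin n → Pref A) (a : A) : Prop :=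
  ∀ i, Dominant (P i) a

/-- A preference is a strict weak ordering: there is an ordered partition of the
alternatives into levels (given by a level function `f`) such that alternatives in the
same level are incomparable, and `a ≻ b` exactly when `a` is in an earlier level. -/
def IsSWO (pref : Pref A) : Prop :=
  ∃ (k : ℕ) (f : A → Fin k), ∀ a b : A, pref a b ↔ f a < f b

/-!
In the profile below, alternative `0` is undominated for three of the four agents, only because
those agents do not rank it at all: no agent ever places `0` above anything, and the fourth agent
places both other alternatives above it. So whenever `0` is discussed with some `b`, the majority
favours `b`, every agent ends up with `b ≻ 0`, and `0` still stays above nothing. Alternatives `1`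
and `2` cannot take over, since each of them is below the other for half of the agents and
majority dynamics never removes a comparison.
-/

section MajorityDynamics

variable {α : Type} {n : ℕ} {P Q : Fin n → Pref α} {a b : α} {p : α × α} {i : Fin n}
  {σ : List (α × α)}

theorem IsUpdateOrder.exists_mem [DecidableEq α] (hσ : IsUpdateOrder σ) (hab : a ≠ b) :
    ∃ p ∈ σ, p = (a, b) ∨ p = (b, a) := by
  have hcount := hσ.2 a b hab
  rcases Nat.eq_zero_or_pos (σ.count (a, b)) with hzero | hpos
  · exact ⟨(b, a), List.count_pos_iff.1 (by omega), .inr rfl⟩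
  · exact ⟨(a, b), List.count_pos_iff.1 hpos, .inl rfl⟩

theorem support_mono (hPQ : P ≤ Q) (a b : α) : support P a b ≤ support Q a b :=
  Finset.card_le_card <| Finset.monotone_filter_right _ fun i _ => hPQ i a b

theorem udCount_add_support_le (P : Fin n → Pref α) (a b : α) :
    udCount P b + support P a b ≤ n := by
  have hdisj : Disjoint (Finset.univ.filter fun i => Undominated (P i) b)
      (Finset.univ.filter fun i => P i a b) :=
    Finset.disjoint_filter.2 fun i _ hund => hund a
  simpa only [udCount, support, Finset.card_union_of_disjoint hdisj, Fintype.card_fin] using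
    Finset.card_le_univ ((Finset.univ.filter fun i => Undominated (P i) b) ∪
      Finset.univ.filter fun i => P i a b)

/-- Some single alternative is ranked above `b` by at least half of the agents. This is the
obstruction to `b` being a MajUD-consensus alternative. -/
def BeatenByHalf (P : Fin n → Pref α) (b : α) : Prop :=
  ∃ c, n ≤ 2 * support P c b

theorem BeatenByHalf.mono (hPQ : P ≤ Q) (hb : BeatenByHalf P b) : BeatenByHalf Q b := by
  obtain ⟨c, hc⟩ := hb
  exact ⟨c, hc.trans (Nat.mul_le_mul_left 2 (support_mono hPQ c b))⟩

theorem BeatenByHalf.two_mul_udCount_le (hb : BeatenByHalf P b) : 2 * udCount P b ≤ n := by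
  obtain ⟨c, hc⟩ := hb
  have := udCount_add_support_le P c b
  omega

theorem majUDConsensus_of_forall_beatenByHalf (ha : n < 2 * udCount P a)
    (hothers : ∀ b, b ≠ a → BeatenByHalf P b) : MajUDConsensus P a :=
  ⟨ha, fun b hb => by_contra fun hne => (hothers b hne).two_mul_udCount_le.not_gt hb⟩

theorem le_mdStep (P : Fin n → Pref α) (p : α × α) : P ≤ mdStep P p := by
  intro i x y hxy
  unfold mdStep
  split_ifs
  · exact hxy
  · exact .single (.inl hxy)
  · exact .single (.inl hxy)

theorem le_md (σ : List (α × α)) (P : Fin n → Pref α) : P ≤ MD σ P := by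
  induction σ generalizing P with
  | nil => exact le_rfl
  | cons p σ ih => exact (le_mdStep P p).trans (ih (mdStep P p))

theorem md_append_cons (s t : List (α × α)) (p : α × α) (P : Fin n → Pref α) :
    MD (s ++ p :: t) P = MD t (mdStep (MD s P) p) := by
  simp only [MD, List.foldl_append, List.foldl_cons]

theorem mdStep_of_support_lt (hlt : support P a b < support P b a)
    (hp : p = (a, b) ∨ p = (b, a)) (hab : ¬ P i a b) : mdStep P p i b a := by
  rcases hp with rfl | rfl
  · unfold mdStep
    split_ifs with hranked hle
    · exact hranked.resolve_left hab
    · exact absurd hle hlt.not_ge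
    · exact .single (.inr ⟨rfl, rfl⟩)
  · unfold mdStep
    split_ifs with hranked hle
    · exact hranked.resolve_right hab
    · exact .single (.inr ⟨rfl, rfl⟩)
    · exact absurd hlt.le hle

theorem not_transGen_of_forall_not {β : Type*} {r : β → β → Prop} {a : β}
    (ha : ∀ y, ¬ r a y) (x : β) : ¬ Relation.TransGen r a x := fun hax =>
  let ⟨y, hay, _⟩ := Relation.TransGen.head'_iff.1 hax
  ha y hay

theorem not_mdStep_of_condorcetLoser (hloser : CondorcetLoser P a) (hbot : ∀ y, ¬ P i a y)
    (hp : p.1 ≠ p.2) (x : α) : ¬ mdStep P p i a x := by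
  obtain ⟨c, d⟩ := p
  unfold mdStep
  split_ifs with _ hle
  · exact hbot x
  · refine not_transGen_of_forall_not ?_ x
    rintro y (hay | ⟨rfl, rfl⟩)
    · exact hbot y hay
    · exact (hloser _ hp.symm).not_ge hle
  · refine not_transGen_of_forall_not ?_ x
    rintro y (hay | ⟨rfl, rfl⟩)
    · exact hbot y hay
    · exact hle (hloser _ hp).le

/-- Nobody ranks `a` above anything, and every other alternative is ranked above `a` by someone.
This strengthening of being a Condorcet loser is the invariant of majority dynamics. -/
structure UncontestedLoser (P : Fin n → Pref α) (a : α) : Prop where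
  not_pref : ∀ i b, ¬ P i a b
  exists_pref : ∀ b, b ≠ a → ∃ i, P i b a

namespace UncontestedLoser

theorem condorcetLoser (ha : UncontestedLoser P a) : CondorcetLoser P a := by
  intro b hb
  obtain ⟨i, hi⟩ := ha.exists_pref b hb
  have hzero : support P a b = 0 :=
    Finset.card_eq_zero.2 <| Finset.filter_eq_empty_iff.2 fun j _ => ha.not_pref j b
  rw [hzero]
  exact Finset.card_pos.2 ⟨i, Finset.mem_filter.2 ⟨Finset.mem_univ i, hi⟩⟩

theorem mdStep_of_ne (ha : UncontestedLoser P a) (hp : p.1 ≠ p.2) :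
    UncontestedLoser (mdStep P p) a where
  not_pref i := not_mdStep_of_condorcetLoser ha.condorcetLoser (ha.not_pref i) hp
  exists_pref b hb := (ha.exists_pref b hb).imp fun i => le_mdStep P p i b a

theorem md_of_forall_ne (ha : UncontestedLoser P a) (hσ : ∀ p ∈ σ, p.1 ≠ p.2) :
    UncontestedLoser (MD σ P) a :=
  List.foldlRecOn (motive := (UncontestedLoser · a)) σ _ ha fun _ hQ p hp =>
    hQ.mdStep_of_ne (hσ p hp)

theorem dominatedIn_md [DecidableEq α] (ha : UncontestedLoser P a) (hσ : IsUpdateOrder σ)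
    (i : Fin n) : DominatedIn (MD σ P i) a := by
  intro b hb
  obtain ⟨p, hpσ, hp⟩ := hσ.exists_mem hb.symm
  obtain ⟨s, t, rfl⟩ := List.append_of_mem hpσ
  have hs : UncontestedLoser (MD s P) a :=
    ha.md_of_forall_ne fun q hq => hσ.1 q (List.mem_append_left _ hq)
  rw [md_append_cons]
  exact le_md t _ i b a (mdStep_of_support_lt (hs.condorcetLoser b hb) hp (hs.not_pref i b))

theorem beatenByHalf_md [DecidableEq α] [Nontrivial α] (ha : UncontestedLoser P a)
    (hσ : IsUpdateOrder σ) : BeatenByHalf (MD σ P) a := by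
  obtain ⟨b, hb⟩ := exists_ne a
  have hall : support (MD σ P) b a = n := by
    simp [support, ha.dominatedIn_md hσ _ b hb]
  exact ⟨b, by omega⟩

theorem not_majUDConsensus_md [DecidableEq α] [Nontrivial α] (ha : UncontestedLoser P a)
    (hothers : ∀ b, b ≠ a → BeatenByHalf P b) (hσ : IsUpdateOrder σ) (b : α) :
    ¬ MajUDConsensus (MD σ P) b := by
  have hb : BeatenByHalf (MD σ P) b := by
    by_cases hba : b = a
    · exact hba ▸ ha.beatenByHalf_md hσ
    · exact (hothers b hba).mono (le_md σ P)
  exact fun hcons => hb.two_mul_udCount_le.not_gt hcons.1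

end UncontestedLoser

end MajorityDynamics

/-- The preference whose only comparison is `a ≻ b`. -/
def singlePref {α : Type} (a b : α) : Pref α := fun x y => x = a ∧ y = b

theorem isPref_singlePref {α : Type} {a b : α} (hab : a ≠ b) : IsPref (singlePref a b) :=
  ⟨fun _ hxx => hab (hxx.1.symm.trans hxx.2), fun _ _ _ hxy hyz => ⟨hxy.1, hyz.2⟩⟩

theorem isPref_gt {α : Type} [Preorder α] : IsPref (fun x y : α => y < x) :=
  ⟨fun x => lt_irrefl x, fun _ _ _ hxy hyz => hyz.trans hxy⟩

/-- The witness profile. The last agent's preference `y < x` is the linear order `2 ≻ 1 ≻ 0`; the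
other agents do not rank alternative `0`. -/
def splitProfile : Fin 4 → Pref (Fin 3) :=
  ![singlePref 1 2, singlePref 1 2, singlePref 2 1, fun x y => y < x]

namespace splitProfile

theorem isPref (i : Fin 4) : IsPref (splitProfile i) := by
  fin_cases i
  · exact isPref_singlePref (by decide)
  · exact isPref_singlePref (by decide)
  · exact isPref_singlePref (by decide)
  · exact isPref_gt

theorem uncontestedLoser_zero : UncontestedLoser splitProfile 0 where
  not_pref i b := by fin_cases i <;> simp [splitProfile, singlePref]
  exists_pref b hb := ⟨3, Fin.pos_of_ne_zero hb⟩

theorem udCount_zero : udCount splitProfile 0 = 3 := by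
  rw [udCount, Finset.card_filter, Fin.sum_univ_four]
  simp [Undominated, splitProfile, singlePref, Fin.exists_fin_succ]

theorem support_one_two : support splitProfile 1 2 = 2 := by
  rw [support, Finset.card_filter, Fin.sum_univ_four]
  simp [splitProfile, singlePref]

theorem support_two_one : support splitProfile 2 1 = 2 := by
  rw [support, Finset.card_filter, Fin.sum_univ_four]
  simp [splitProfile, singlePref]

theorem beatenByHalf_of_ne_zero (b : Fin 3) (hb : b ≠ 0) : BeatenByHalf splitProfile b := by
  fin_cases b
  · exact absurd rfl hb
  · exact ⟨2, (congrArg (2 * ·) support_two_one).ge⟩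
  · exact ⟨1, (congrArg (2 * ·) support_one_two).ge⟩

theorem majUDConsensus_zero : MajUDConsensus splitProfile 0 :=
  majUDConsensus_of_forall_beatenByHalf (by simp [udCount_zero]) beatenByHalf_of_ne_zero

end splitProfile

/-- Majority dynamics does not enable positive MajUD-consensus
existence control. -/
theorem stmt_18 :
    ∃ (m n : ℕ) (P : Fin n → Pref (Fin m)) (a : Fin m),
      3 ≤ m ∧ (∀ i, IsPref (P i)) ∧ MajUDConsensus P a ∧
      ∀ σ : List (Fin m × Fin m), IsUpdateOrder σ →
        ∀ b, ¬ MajUDConsensus (MD σ P) b := by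
  refine ⟨3, 4, splitProfile, 0, le_rfl, splitProfile.isPref,
    splitProfile.majUDConsensus_zero, fun σ hσ => ?_⟩
  exact splitProfile.uncontestedLoser_zero.not_majUDConsensus_md
    splitProfile.beatenByHalf_of_ne_zero hσ

end
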